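/- Let Ξ be a nonempty compact subset of ℝ^d, let Q : Ξ → ℝ be bounded and upper semicontinuous, let ψ_1, …, ψ_m : Ξ → ℝ be continuous, let γ_1, …, γ_m ∈ ℝ, and suppose the ambiguity set 𝒫 is nonempty. Then the worst-case expected value is attained by a distribution supported on at most m+1 points: there exist ξ_1, …, ξ_{m+1} ∈ Ξ and p_1, …, p_{m+1} ≥ 0 with ∑_{j=1}^{m+1} p_j = 1, ∑_{j=1}^{m+1} p_j ψ_i(ξ_j) ≤ γ_i for every i ∈ {1,…,m}, and ∑_{j=1}^{m+1} p_j Q(ξ_j) = sup_{P ∈ 𝒫} ∫_Ξ Q dP. -/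

import Mathlib

open MeasureTheory Filter

/-!
Put all the integrands into one vector-valued function `F = (Q, -ψ_1, …, -ψ_m)`. The truncated
hypograph `⋃ x ∈ Ξ, [b, F x]` is compact, hence so is its convex hull, and the hull contains the
moment vector `∫ F dP` of every feasible `P`. Maximize the `Q`-coordinate over the hull under the
moment constraints. A maximizer is not interior to the hull, because the constraints leave the
`Q`-coordinate free to increase, so Carathéodory's theorem represents it with `m + 1` points of the
hypograph instead of `m + 2`. Replacing each of these points by the value of `F` above it only
increases all coordinates, so feasibility and optimality survive.
-/

section ConvexCombinations

variable {ι κ E : Type*} [Fintype ι] [Fintype κ]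

/-- The points that are convex combinations, with weights indexed by `ι`, of points of `S`. Zero
weights and repeated points are allowed, so only the cardinality of `ι` matters. -/
def convexCombinations (ι : Type*) [Fintype ι] [AddCommGroup E] [Module ℝ E] (S : Set E) : Set E :=
  (fun q : (ι → ℝ) × (ι → E) => ∑ i, q.1 i • q.2 i) ''
    (stdSimplex ℝ ι ×ˢ Set.univ.pi fun _ => S)

theorem convexCombinations_subset_convexHull [AddCommGroup E] [Module ℝ E] (S : Set E) :
    convexCombinations ι S ⊆ convexHull ℝ S := by
  rintro _ ⟨⟨w, z⟩, ⟨⟨hw, hw1⟩, hz⟩, rfl⟩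
  exact (convex_convexHull ℝ S).sum_mem (fun i _ => hw i) hw1
    fun i _ => subset_convexHull ℝ S (hz i trivial)

theorem sum_smul_mem_convexCombinations [AddCommGroup E] [Module ℝ E] {S : Set E}
    (hcard : Fintype.card ι ≤ Fintype.card κ) {w : ι → ℝ} (hw : w ∈ stdSimplex ℝ ι)
    {z : ι → E} (hz : ∀ i, z i ∈ S) :
    ∑ i, w i • z i ∈ convexCombinations κ S := by
  obtain ⟨e⟩ := Function.Embedding.nonempty_of_card_le hcard
  have : Nonempty ι := by
    by_contra! h
    simpa using hw.2
  let w' : κ → ℝ := Function.extend e w 0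
  have hw'_apply (i : ι) : w' (e i) = w i := e.injective.extend_apply _ _ i
  have hw'_eq_zero (k : κ) (hk : k ∉ Set.range e) : w' k = 0 := Function.extend_apply' _ _ _ hk
  have hw'_nonneg : 0 ≤ w' := Function.extend_nonneg hw.1 le_rfl
  have hw'_sum : ∑ k, w' k = 1 :=
    (Fintype.sum_of_injective e e.injective w w' hw'_eq_zero
      fun i => (hw'_apply i).symm).symm.trans hw.2
  refine ⟨(w', z ∘ Function.invFun e), ⟨⟨hw'_nonneg, hw'_sum⟩, fun k _ => hz _⟩, ?_⟩
  refine (Fintype.sum_of_injective e e.injective _ _ (fun k hk => ?_) fun i => ?_).symm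
  · simp only [hw'_eq_zero k hk, zero_smul]
  · simp only [hw'_apply, Function.comp_apply, Function.leftInverse_invFun e.injective i]

theorem isCompact_convexCombinations [AddCommGroup E] [Module ℝ E] [TopologicalSpace E]
    [ContinuousAdd E] [ContinuousSMul ℝ E] {S : Set E} (hS : IsCompact S) :
    IsCompact (convexCombinations ι S) :=
  ((isCompact_stdSimplex ℝ ι).prod (isCompact_univ_pi fun _ => hS)).image (by fun_prop)

theorem convexHull_eq_convexCombinations [AddCommGroup E] [Module ℝ E] [FiniteDimensional ℝ E]
    (hcard : Module.finrank ℝ E + 1 ≤ Fintype.card ι) (S : Set E) :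
    convexHull ℝ S = convexCombinations ι S := by
  refine Set.Subset.antisymm (fun x hx => ?_) (convexCombinations_subset_convexHull S)
  obtain ⟨κ, _, z, w, hz, hind, hw, hw1, rfl⟩ := eq_pos_convex_span_of_mem_convexHull hx
  have hκ : Fintype.card κ ≤ Module.finrank ℝ E + 1 :=
    hind.card_le_finrank_succ.trans (Nat.succ_le_succ (Submodule.finrank_le _))
  exact sum_smul_mem_convexCombinations (hκ.trans hcard) ⟨fun i => (hw i).le, hw1⟩
    fun i => hz ⟨i, rfl⟩

theorem isCompact_convexHull [AddCommGroup E] [Module ℝ E] [FiniteDimensional ℝ E]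
    [TopologicalSpace E] [ContinuousAdd E] [ContinuousSMul ℝ E] {S : Set E} (hS : IsCompact S) :
    IsCompact (convexHull ℝ S) := by
  rw [convexHull_eq_convexCombinations (ι := Fin (Module.finrank ℝ E + 1)) (by simp)]
  exact isCompact_convexCombinations hS

theorem exists_pos_add_smul_mem_of_mem_interior [AddCommGroup E] [Module ℝ E]
    [TopologicalSpace E] [ContinuousAdd E] [ContinuousSMul ℝ E] {s : Set E} {x : E}
    (hx : x ∈ interior s) (v : E) : ∃ ε : ℝ, 0 < ε ∧ x + ε • v ∈ s := by
  have hlim : Tendsto (fun ε : ℝ => x + ε • v) (nhds 0) (nhds x) :=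
    Continuous.tendsto' (by fun_prop) _ _ (by simp)
  have hmem : ∀ᶠ ε in nhdsWithin (0 : ℝ) (Set.Ioi 0), x + ε • v ∈ s :=
    (hlim.eventually (mem_interior_iff_mem_nhds.mp hx)).filter_mono nhdsWithin_le_nhds
  exact (eventually_mem_nhdsWithin.and hmem).exists

variable [NormedAddCommGroup E] [NormedSpace ℝ E] [FiniteDimensional ℝ E] {S : Set E}

theorem sum_smul_mem_interior_convexHull_range {z : ι → E} (hz : AffineIndependent ℝ z)
    (hcard : Fintype.card ι = Module.finrank ℝ E + 1) {w : ι → ℝ} (hw : ∀ i, 0 < w i)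
    (hw1 : ∑ i, w i = 1) :
    ∑ i, w i • z i ∈ interior (convexHull ℝ (Set.range z)) := by
  let b : AffineBasis ι ℝ E := ⟨z, hz, hz.affineSpan_eq_top_iff_card_eq_finrank_add_one.mpr hcard⟩
  change ∑ i, w i • b i ∈ interior (convexHull ℝ (Set.range b))
  rw [b.interior_convexHull]
  intro i
  rw [← Finset.affineCombination_eq_linear_combination _ b w hw1,
    b.coord_apply_combination_of_mem (Finset.mem_univ i) hw1]
  exact hw i

theorem mem_convexCombinations_of_notMem_interior (hcard : Module.finrank ℝ E ≤ Fintype.card ι)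
    {x : E} (hx : x ∈ convexHull ℝ S) (hint : x ∉ interior (convexHull ℝ S)) :
    x ∈ convexCombinations ι S := by
  obtain ⟨κ, _, z, w, hz, hind, hw, hw1, rfl⟩ := eq_pos_convex_span_of_mem_convexHull hx
  have hκ : Fintype.card κ ≤ Module.finrank ℝ E + 1 :=
    hind.card_le_finrank_succ.trans (Nat.succ_le_succ (Submodule.finrank_le _))
  have hκ' : Fintype.card κ ≠ Module.finrank ℝ E + 1 := fun h =>
    hint (interior_mono (convexHull_mono hz)
      (sum_smul_mem_interior_convexHull_range hind h hw hw1))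
  exact sum_smul_mem_convexCombinations (by lia) ⟨fun i => (hw i).le, hw1⟩ fun i => hz ⟨i, rfl⟩

theorem exists_isMaxOn_convexHull_inter_mem_convexCombinations
    (hcard : Module.finrank ℝ E ≤ Fintype.card ι) (hS : IsCompact S) {T : Set E} (hT : IsClosed T)
    (hne : (convexHull ℝ S ∩ T).Nonempty) {v : E}
    (hv : ∀ x ∈ T, ∀ ε : ℝ, 0 < ε → x + ε • v ∈ T) (f : E →L[ℝ] ℝ) (hfv : 0 < f v) :
    ∃ x ∈ convexCombinations ι S ∩ T, IsMaxOn f (convexHull ℝ S ∩ T) x := by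
  obtain ⟨x, ⟨hxS, hxT⟩, hmax⟩ :=
    ((isCompact_convexHull hS).inter_right hT).exists_isMaxOn hne f.continuous.continuousOn
  refine ⟨x, ⟨mem_convexCombinations_of_notMem_interior hcard hxS fun hint => ?_, hxT⟩, hmax⟩
  obtain ⟨ε, hε, hmem⟩ := exists_pos_add_smul_mem_of_mem_interior hint v
  have hle : f (x + ε • v) ≤ f x := hmax ⟨hmem, hv x hxT ε hε⟩
  rw [map_add, map_smul, smul_eq_mul] at hle
  exact absurd (mul_pos hε hfv) (by linarith)

end ConvexCombinations

section Integrability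

variable {X : Type*} [TopologicalSpace X] [MeasurableSpace X] [OpensMeasurableSpace X]
  {μ : Measure X} {s : Set X}

theorem aemeasurable_restrict_of_upperSemicontinuousOn {α : Type*} [LinearOrder α]
    [TopologicalSpace α] [OrderTopology α] [SecondCountableTopology α] [MeasurableSpace α]
    [BorelSpace α] {f : X → α} (hs : MeasurableSet s) (hf : UpperSemicontinuousOn f s) :
    AEMeasurable f (μ.restrict s) :=
  aemeasurable_restrict_of_measurable_subtype hs
    (upperSemicontinuousOn_iff_restrict.mpr hf).measurable

theorem integrableOn_of_upperSemicontinuousOn [T2Space X] [IsFiniteMeasureOnCompacts μ]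
    {f : X → ℝ} (hs : IsCompact s) (hf : UpperSemicontinuousOn f s) (hb : BddBelow (f '' s)) :
    IntegrableOn f s μ := by
  obtain ⟨C, hC⟩ := isBounded_iff_forall_norm_le.mp
    (isBounded_iff_bddBelow_bddAbove.mpr ⟨hb, hf.bddAbove_of_isCompact hs⟩)
  exact IntegrableOn.of_bound hs.measure_lt_top
    (aemeasurable_restrict_of_upperSemicontinuousOn hs.measurableSet hf).aestronglyMeasurable C
    ((ae_restrict_mem hs.measurableSet).mono fun x hx => hC _ ⟨x, hx, rfl⟩)

end Integrability

section HypographImage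

variable {ι κ X : Type*} [Fintype ι] {K : Set X} {F : X → κ → ℝ} {b : κ → ℝ}

/-- The vectors that lie above `b` and below some value of `F` on `K`: the projection to `κ → ℝ` of
the hypograph of `F`, truncated at `b` to make it compact. -/
def hypographImage (K : Set X) (F : X → κ → ℝ) (b : κ → ℝ) : Set (κ → ℝ) :=
  ⋃ x ∈ K, Set.Icc b (F x)

theorem mem_hypographImage {t : κ → ℝ} :
    t ∈ hypographImage K F b ↔ ∃ x ∈ K, b ≤ t ∧ t ≤ F x := by
  simp only [hypographImage, Set.mem_iUnion, Set.mem_Icc, exists_prop]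

theorem exists_le_sum_smul_of_mem_convexCombinations {t : κ → ℝ}
    (ht : t ∈ convexCombinations ι (hypographImage K F b)) :
    ∃ w ∈ stdSimplex ℝ ι, ∃ ξ : ι → X, (∀ i, ξ i ∈ K) ∧ t ≤ ∑ i, w i • F (ξ i) := by
  obtain ⟨⟨w, z⟩, ⟨hw, hz⟩, rfl⟩ := ht
  choose ξ hξ _ hzF using fun i => mem_hypographImage.mp (hz i trivial)
  exact ⟨w, hw, ξ, hξ, Finset.sum_le_sum fun i _ => smul_le_smul_of_nonneg_left (hzF i) (hw.1 i)⟩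

theorem isCompact_hypographImage [TopologicalSpace X] [T2Space X] (hK : IsCompact K)
    (hF : ∀ k, UpperSemicontinuousOn (F · k) K) : IsCompact (hypographImage K F b) := by
  choose B hB using fun k => (hF k).bddAbove_of_isCompact hK
  have hclosed : IsClosed (⋂ k, {q : X × (κ → ℝ) | q.1 ∈ K ∧ q.2 k ≤ F q.1 k}) :=
    isClosed_iInter fun k =>
      ((upperSemicontinuousOn_iff_isClosed_hypograph hK.isClosed).mp (hF k)).preimage
        (f := fun q : X × (κ → ℝ) => (q.1, q.2 k)) (by fun_prop)
  have himage : hypographImage K F b = Prod.snd '' ((K ×ˢ Set.Icc b B) ∩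
      ⋂ k, {q : X × (κ → ℝ) | q.1 ∈ K ∧ q.2 k ≤ F q.1 k}) := by
    ext t
    rw [mem_hypographImage]
    constructor
    · rintro ⟨x, hx, hbt, htF⟩
      have htB : t ≤ B := fun k => (htF k).trans (hB k ⟨x, hx, rfl⟩)
      exact ⟨(x, t), ⟨⟨hx, hbt, htB⟩, Set.mem_iInter.mpr fun k => ⟨hx, htF k⟩⟩, rfl⟩
    · rintro ⟨⟨x, t⟩, ⟨⟨hx, hbt, -⟩, htF⟩, rfl⟩
      exact ⟨x, hx, hbt, fun k => (Set.mem_iInter.mp htF k).2⟩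
  rw [himage]
  exact ((hK.prod isCompact_Icc).inter_right hclosed).image continuous_snd

theorem integral_mem_convexHull_hypographImage [Finite κ] [TopologicalSpace X] [T2Space X]
    [MeasurableSpace X] [OpensMeasurableSpace X] (hK : IsCompact K)
    (hF : ∀ k, UpperSemicontinuousOn (F · k) K) (hb : ∀ x ∈ K, b ≤ F x) {P : Measure X}
    [IsProbabilityMeasure P] (hP : P Kᶜ = 0) :
    (fun k => ∫ x, F x k ∂P) ∈ convexHull ℝ (hypographImage K F b) := by
  cases nonempty_fintype κ
  have hPK : ∀ᵐ x ∂P, x ∈ K := hP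
  have hint (k : κ) : Integrable (F · k) P := by
    rw [← Measure.restrict_eq_self_of_ae_mem hPK]
    exact integrableOn_of_upperSemicontinuousOn hK (hF k)
      ⟨b k, Set.forall_mem_image.mpr fun x hx => hb x hx k⟩
  have hmean : ∫ x, F x ∂P = fun k => ∫ x, F x k ∂P := funext (eval_integral hint)
  rw [← hmean]
  exact (convex_convexHull ℝ _).integral_mem
    (isCompact_convexHull (isCompact_hypographImage hK hF)).isClosed
    (hPK.mono fun x hx =>
      subset_convexHull ℝ _ (mem_hypographImage.mpr ⟨x, hx, hb x hx, le_rfl⟩))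
    (Integrable.of_eval hint)

theorem exists_sum_smul_mem_forall_mem_convexHull_le [Fintype κ] [TopologicalSpace X] [T2Space X]
    (hK : IsCompact K) (hF : ∀ k, UpperSemicontinuousOn (F · k) K) {T : Set (κ → ℝ)}
    (hTc : IsClosed T) (hTu : IsUpperSet T)
    (hne : (convexHull ℝ (hypographImage K F b) ∩ T).Nonempty) (k : κ) :
    ∃ w ∈ stdSimplex ℝ κ, ∃ ξ : κ → X, (∀ j, ξ j ∈ K) ∧ ∑ j, w j • F (ξ j) ∈ T ∧
      ∀ t ∈ convexHull ℝ (hypographImage K F b) ∩ T, t k ≤ (∑ j, w j • F (ξ j)) k := by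
  classical
  obtain ⟨q, ⟨hq, hqT⟩, hmax⟩ := exists_isMaxOn_convexHull_inter_mem_convexCombinations (ι := κ)
    (Module.finrank_fintype_fun_eq_card ℝ).le (isCompact_hypographImage hK hF) hTc hne
    (v := Pi.single k 1)
    (fun t ht ε hε => hTu (le_add_of_nonneg_right
      (smul_nonneg hε.le (Pi.single_nonneg.mpr zero_le_one))) ht)
    (ContinuousLinearMap.proj k) (by simp)
  obtain ⟨w, hw, ξ, hξ, hqF⟩ := exists_le_sum_smul_of_mem_convexCombinations hq
  exact ⟨w, hw, ξ, hξ, hTu hqF hqT, fun t ht => (hmax ht).trans (hqF k)⟩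

end HypographImage

section AmbiguitySet

variable {ι κ X : Type*} [MeasurableSpace X]

/-- The probability measures carried by `Ξ` whose moments `∫ ψ i` are at most `γ i`. They are
encoded as measures on the whole space for which the complement of `Ξ` is a null set. -/
def ambiguitySet (Ξ : Set X) (ψ : ι → X → ℝ) (γ : ι → ℝ) : Set (Measure X) :=
  {P | IsProbabilityMeasure P ∧ P Ξᶜ = 0 ∧ ∀ i, ∫ x, ψ i x ∂P ≤ γ i}

theorem integral_sum_dirac_ofReal [Fintype ι] [MeasurableSingletonClass X] {p : ι → ℝ}
    (hp : 0 ≤ p) (ξ : ι → X) (f : X → ℝ) :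
    ∫ x, f x ∂Measure.sum (fun j => ENNReal.ofReal (p j) • Measure.dirac (ξ j)) =
      ∑ j, p j * f (ξ j) := by
  rw [integral_sum_dirac fun _ => ENNReal.ofReal_ne_top, tsum_fintype]
  simp only [ENNReal.toReal_ofReal (hp _), smul_eq_mul]

theorem sum_dirac_mem_ambiguitySet [Fintype κ] [MeasurableSingletonClass X] {Ξ : Set X}
    {ψ : ι → X → ℝ} {γ : ι → ℝ} {p : κ → ℝ} (hp : p ∈ stdSimplex ℝ κ) {ξ : κ → X}
    (hξ : ∀ j, ξ j ∈ Ξ) (hγ : ∀ i, ∑ j, p j * ψ i (ξ j) ≤ γ i) :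
    Measure.sum (fun j => ENNReal.ofReal (p j) • Measure.dirac (ξ j)) ∈ ambiguitySet Ξ ψ γ := by
  refine ⟨HasSum.isProbabilityMeasure_sum_dirac hp.1 (hp.2 ▸ hasSum_fintype p), ?_, fun i => ?_⟩
  · refine Measure.sum_apply_eq_zero.mpr fun j => ?_
    rw [Measure.smul_apply, Measure.dirac_apply, Set.indicator_of_notMem (not_not.mpr (hξ j)),
      smul_zero]
  · exact (integral_sum_dirac_ofReal hp.1 ξ (ψ i)).trans_le (hγ i)

end AmbiguitySet

section SignedIntegrands

variable {κ X : Type*} [Fintype κ] {m : ℕ} {Q : X → ℝ} {ψ : Fin m → X → ℝ} {γ : Fin m → ℝ}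
  {Ξ : Set X}

/-- The objective `Q` in coordinate `0`, followed by the constraint functions `ψ i` with their signs
reversed, so that larger is better in every coordinate. -/
def signedIntegrands (Q : X → ℝ) (ψ : Fin m → X → ℝ) (x : X) : Fin (m + 1) → ℝ :=
  Fin.cons (Q x) fun i => -ψ i x

/-- The vectors of moments of `signedIntegrands Q ψ` that satisfy the constraints with bounds `γ`.
-/
def feasibleMoments (γ : Fin m → ℝ) : Set (Fin (m + 1) → ℝ) :=
  {t | ∀ i : Fin m, -γ i ≤ t i.succ}

theorem isClosed_feasibleMoments : IsClosed (feasibleMoments γ) := by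
  simp only [feasibleMoments, Set.ofPred_forall]
  exact isClosed_iInter fun i => isClosed_le continuous_const (continuous_apply _)

theorem isUpperSet_feasibleMoments : IsUpperSet (feasibleMoments γ) :=
  fun _ _ hle h i => (h i).trans (hle i.succ)

theorem upperSemicontinuousOn_signedIntegrands [TopologicalSpace X]
    (hQ : UpperSemicontinuousOn Q Ξ) (hψ : ∀ i, LowerSemicontinuousOn (ψ i) Ξ) (k : Fin (m + 1)) :
    UpperSemicontinuousOn (signedIntegrands Q ψ · k) Ξ := by
  cases k using Fin.cases with
  | zero => exact hQ
  | succ i => exact continuous_neg.comp_lowerSemicontinuousOn_antitone (hψ i) fun _ _ => neg_le_neg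

theorem exists_le_signedIntegrands (hQ : BddBelow (Q '' Ξ)) (hψ : ∀ i, BddAbove (ψ i '' Ξ)) :
    ∃ b, ∀ x ∈ Ξ, b ≤ signedIntegrands Q ψ x := by
  obtain ⟨b₀, hb₀⟩ := hQ
  choose B hB using hψ
  exact ⟨Fin.cons b₀ fun i => -B i, fun x hx => Fin.cons_le_cons.mpr
    ⟨hb₀ ⟨x, hx, rfl⟩, fun i => neg_le_neg (hB i ⟨x, hx, rfl⟩)⟩⟩

theorem integral_signedIntegrands_mem_feasibleMoments [MeasurableSpace X] {P : Measure X}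
    (hP : P ∈ ambiguitySet Ξ ψ γ) :
    (fun k => ∫ x, signedIntegrands Q ψ x k ∂P) ∈ feasibleMoments γ := fun i =>
  (neg_le_neg (hP.2.2 i)).trans_eq (integral_neg (ψ i)).symm

theorem sum_smul_signedIntegrands_zero (p : κ → ℝ) (ξ : κ → X) :
    (∑ j, p j • signedIntegrands Q ψ (ξ j)) 0 = ∑ j, p j * Q (ξ j) := by
  simp only [signedIntegrands, Finset.sum_apply, Pi.smul_apply, Fin.cons_zero, smul_eq_mul]

theorem sum_smul_signedIntegrands_mem_feasibleMoments {p : κ → ℝ} {ξ : κ → X} :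
    ∑ j, p j • signedIntegrands Q ψ (ξ j) ∈ feasibleMoments γ ↔
      ∀ i, ∑ j, p j * ψ i (ξ j) ≤ γ i := by
  simp only [feasibleMoments, signedIntegrands, Set.mem_ofPred_eq, Finset.sum_apply, Pi.smul_apply,
    Fin.cons_succ, smul_eq_mul, mul_neg, Finset.sum_neg_distrib, neg_le_neg_iff]

end SignedIntegrands

theorem WCEV_attained_by_m_plus_one_points_general {X : Type*} [TopologicalSpace X] [T2Space X]
    [MeasurableSpace X] [OpensMeasurableSpace X] {m : ℕ} {Ξ : Set X} (hΞ : IsCompact Ξ)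
    {Q : X → ℝ} (hQ : UpperSemicontinuousOn Q Ξ) (hQb : BddBelow (Q '' Ξ))
    {ψ : Fin m → X → ℝ} (hψ : ∀ i, LowerSemicontinuousOn (ψ i) Ξ)
    (hψb : ∀ i, BddAbove (ψ i '' Ξ)) {γ : Fin m → ℝ} (hamb : (ambiguitySet Ξ ψ γ).Nonempty) :
    ∃ (ξ : Fin (m + 1) → X) (p : Fin (m + 1) → ℝ),
      (∀ j, ξ j ∈ Ξ) ∧ (∀ j, 0 ≤ p j) ∧ (∑ j, p j = 1) ∧
      (∀ i, ∑ j, p j * ψ i (ξ j) ≤ γ i) ∧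
      IsGreatest ((fun P => ∫ x, Q x ∂P) '' ambiguitySet Ξ ψ γ) (∑ j, p j * Q (ξ j)) := by
  have hF := upperSemicontinuousOn_signedIntegrands hQ hψ
  obtain ⟨b, hb⟩ := exists_le_signedIntegrands hQb hψb
  have moments_mem (P : Measure X) (hP : P ∈ ambiguitySet Ξ ψ γ) :
      (fun k => ∫ x, signedIntegrands Q ψ x k ∂P) ∈
        convexHull ℝ (hypographImage Ξ (signedIntegrands Q ψ) b) ∩ feasibleMoments γ :=
    have := hP.1
    ⟨integral_mem_convexHull_hypographImage hΞ hF hb hP.2.1,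
      integral_signedIntegrands_mem_feasibleMoments hP⟩
  obtain ⟨P₀, hP₀⟩ := hamb
  obtain ⟨p, hp, ξ, hξ, hfeas, hmax⟩ := exists_sum_smul_mem_forall_mem_convexHull_le hΞ hF
    isClosed_feasibleMoments isUpperSet_feasibleMoments ⟨_, moments_mem P₀ hP₀⟩ 0
  rw [sum_smul_signedIntegrands_mem_feasibleMoments] at hfeas
  simp only [sum_smul_signedIntegrands_zero] at hmax
  exact ⟨ξ, p, hξ, hp.1, hp.2, hfeas,
    ⟨_, sum_dirac_mem_ambiguitySet hp hξ hfeas, integral_sum_dirac_ofReal hp.1 ξ Q⟩,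
    Set.forall_mem_image.mpr fun P hP => hmax _ (moments_mem P hP)⟩

/-- (Richter–Rogosinski-type result.) If `Q` is bounded and upper
semicontinuous on the nonempty compact set `Ξ`, the `ψ_i` are continuous on `Ξ` and the
ambiguity set is nonempty, then the worst-case expected value is attained by a
distribution supported on at most `m + 1` points. -/
theorem WCEV_attained_by_m_plus_one_points
    (d m : ℕ) (Ξ : Set (EuclideanSpace ℝ (Fin d)))
    (hΞne : Ξ.Nonempty) (hΞc : IsCompact Ξ)
    (Q : EuclideanSpace ℝ (Fin d) → ℝ)
    (hQu : UpperSemicontinuousOn Q Ξ) (hQb : ∃ C, ∀ x ∈ Ξ, |Q x| ≤ C)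
    (ψ : Fin m → EuclideanSpace ℝ (Fin d) → ℝ)
    (hψc : ∀ i, ContinuousOn (ψ i) Ξ)
    (γ : Fin m → ℝ)
    (hamb : ∃ P : Measure (EuclideanSpace ℝ (Fin d)),
      IsProbabilityMeasure P ∧ P Ξᶜ = 0 ∧ ∀ i, ∫ x, ψ i x ∂P ≤ γ i) :
    ∃ (ξ : Fin (m + 1) → EuclideanSpace ℝ (Fin d)) (p : Fin (m + 1) → ℝ),
      (∀ j, ξ j ∈ Ξ) ∧ (∀ j, 0 ≤ p j) ∧ (∑ j, p j = 1) ∧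
      (∀ i, ∑ j, p j * ψ i (ξ j) ≤ γ i) ∧
      (∑ j, p j * Q (ξ j)) =
        sSup {r : ℝ | ∃ P : Measure (EuclideanSpace ℝ (Fin d)),
          (IsProbabilityMeasure P ∧ P Ξᶜ = 0 ∧ ∀ i, ∫ x, ψ i x ∂P ≤ γ i) ∧
          (∫ x, Q x ∂P) = r} := by
  obtain ⟨C, hC⟩ := hQb
  have hQbdd : BddBelow (Q '' Ξ) :=
    ⟨-C, Set.forall_mem_image.mpr fun x hx => neg_le_of_abs_le (hC x hx)⟩
  obtain ⟨ξ, p, hξ, hp, hp1, hfeas, hmax⟩ :=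
    WCEV_attained_by_m_plus_one_points_general hΞc hQu hQbdd
      (fun i => (hψc i).lowerSemicontinuousOn) (fun i => hΞc.bddAbove_image (hψc i)) hamb
  exact ⟨ξ, p, hξ, hp, hp1, hfeas, hmax.csSup_eq.symm⟩
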